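/- Let (W,S) be a Coxeter system with S finite, S irreducible and non-spherical (i.e. W is infinite). Then for every s ∈ S there exists a good marking with core s. -/

import Mathlib

variable {B : Type*} {W : Type*} [Group W] {M : CoxeterMatrix B}

/-- A subset `J` of the index set is *spherical* if the corresponding simple reflections
generate a finite subgroup. -/
def Spherical (cs : CoxeterSystem M W) (J : Set B) : Prop :=
  (Subgroup.closure (cs.simple '' J) : Set W).Finite

/-- Two indices are *adjacent* if the corresponding simple reflections generate a finite
subgroup. -/
def Adjacent (cs : CoxeterSystem M W) (i j : B) : Prop :=
  (Subgroup.closure {cs.simple i, cs.simple j} : Set W).Finite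

/-- A subset is *2-spherical* if every pair of its elements is adjacent. -/
def TwoSpherical (cs : CoxeterSystem M W) (J : Set B) : Prop :=
  ∀ i ∈ J, ∀ j ∈ J, Adjacent cs i j

/-- A subset is *irreducible* if it cannot be partitioned into two nonempty subsets whose
corresponding simple reflections commute elementwise. -/
def IrreducibleSubset (cs : CoxeterSystem M W) (J : Set B) : Prop :=
  ¬ ∃ K L : Set B, K.Nonempty ∧ L.Nonempty ∧ Disjoint K L ∧ K ∪ L = J ∧
      ∀ k ∈ K, ∀ l ∈ L, Commute (cs.simple k) (cs.simple l)

/-- `perpIn cs T J` is the set `J⊥` of elements of `T ∖ J` whose simple reflections commute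
with those of every element of `J`. -/
def perpIn (cs : CoxeterSystem M W) (T J : Set B) : Set B :=
  {i ∈ T \ J | ∀ j ∈ J, Commute (cs.simple i) (cs.simple j)}

/-- A subset `T` of the index set is *connected* if any two of its elements are joined by a
path inside `T` whose edges are adjacent pairs. -/
def ConnectedIn (cs : CoxeterSystem M W) (T : Set B) : Prop :=
  ∀ a ∈ T, ∀ b ∈ T,
    Relation.ReflTransGen (fun x y => x ∈ T ∧ y ∈ T ∧ Adjacent cs x y) a b

/-- A subset `T` is *twist-rigid* if for every irreducible spherical subset `L ⊆ T` the set
`T ∖ (L ∪ L⊥)` is connected, where `L⊥` is taken inside `T`. -/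
def TwistRigidIn (cs : CoxeterSystem M W) (T : Set B) : Prop :=
  ∀ L ⊆ T, IrreducibleSubset cs L → Spherical cs L →
    ConnectedIn cs (T \ (L ∪ perpIn cs T L))

/-- A pair `(s, w)` is a *base* if `ℓ(w⁻¹ s w) = 2 ℓ(w) + 1` and every reflection `t` with
`ℓ(t w) < ℓ(w)` generates together with `s` a finite subgroup. -/
def IsBase (cs : CoxeterSystem M W) (s : B) (w : W) : Prop :=
  cs.length (w⁻¹ * cs.simple s * w) = 2 * cs.length w + 1 ∧
    ∀ t : W, cs.IsReflection t → cs.length (t * w) < cs.length w →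
      (Subgroup.closure {cs.simple s, t} : Set W).Finite

/-- `J` is the *support* of `(s, w)` if it is the smallest subset of the index set containing
`s` with `w ∈ W_J`. -/
def IsSupport (cs : CoxeterSystem M W) (s : B) (w : W) (J : Set B) : Prop :=
  s ∈ J ∧ w ∈ Subgroup.closure (cs.simple '' J) ∧
    ∀ J' : Set B, s ∈ J' → w ∈ Subgroup.closure (cs.simple '' J') → J ⊆ J'

/-- A base `(s, w)` is *simple* if `w` is represented by a reduced word whose letters are
pairwise distinct and distinct from `s`. -/
def IsSimpleBase (cs : CoxeterSystem M W) (s : B) (w : W) : Prop :=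
  IsBase cs s w ∧ ∃ l : List B, w = cs.wordProd l ∧ cs.length w = l.length ∧
    l.Nodup ∧ s ∉ l

/-- The *shadow* of a base `(s, w)` with support `J`: the set of `j ∈ J` with
`ℓ((wj)⁻¹ s (wj)) ≤ ℓ(w⁻¹ s w)`. -/
def shadow (cs : CoxeterSystem M W) (s : B) (w : W) (J : Set B) : Set B :=
  {j ∈ J | cs.length ((w * cs.simple j)⁻¹ * cs.simple s * (w * cs.simple j)) ≤
    cs.length (w⁻¹ * cs.simple s * w)}

/-- A *marking* `((s, w), m)`: a base `(s, w)` together with its support `supp` and a marker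
`m ∈ S ∖ supp⊥`. -/
structure Marking (cs : CoxeterSystem M W) where
  core : B
  elt : W
  marker : B
  supp : Set B
  isBase : IsBase cs core elt
  isSupport : IsSupport cs core elt supp
  marker_not_perp : marker ∉ perpIn cs Set.univ supp

variable {cs : CoxeterSystem M W}

/-- A marking is *complete* if `s · (w m w⁻¹)` has infinite order. -/
def Marking.Complete (μ : Marking cs) : Prop :=
  ¬ IsOfFinOrder (cs.simple μ.core * (μ.elt * cs.simple μ.marker * μ.elt⁻¹))

/-- A marking is *semi-complete* if `J ∪ {m}` is irreducible, 2-spherical and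
non-spherical. -/
def Marking.SemiComplete (μ : Marking cs) : Prop :=
  IrreducibleSubset cs (μ.supp ∪ {μ.marker}) ∧
    TwoSpherical cs (μ.supp ∪ {μ.marker}) ∧ ¬ Spherical cs (μ.supp ∪ {μ.marker})

/-- A marking is *simple* if its base is simple and its marker lies outside its support. -/
def Marking.Simple (μ : Marking cs) : Prop :=
  IsSimpleBase cs μ.core μ.elt ∧ μ.marker ∉ μ.supp

/-- A *good* marking is a complete or semi-complete simple marking with spherical
support. -/
def Marking.Good (μ : Marking cs) : Prop :=
  (μ.Complete ∨ μ.SemiComplete) ∧ μ.Simple ∧ Spherical cs μ.supp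

/-- Move N1: same core, same group element, adjacent markers. -/
def MoveN1 (μ μ' : Marking cs) : Prop :=
  μ.core = μ'.core ∧ μ.elt = μ'.elt ∧ Adjacent cs μ.marker μ'.marker

/-- Move M1: same core, same group element, adjacent markers, both markings complete. -/
def MoveM1 (μ μ' : Marking cs) : Prop :=
  μ.core = μ'.core ∧ μ.elt = μ'.elt ∧ Adjacent cs μ.marker μ'.marker ∧
    μ.Complete ∧ μ'.Complete

/-- Move M2: same core, equal markers, and the group elements differ by one simple
reflection adjacent to the marker. -/
def MoveM2 (μ μ' : Marking cs) : Prop :=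
  μ.core = μ'.core ∧ μ.marker = μ'.marker ∧
    ∃ j : B, (μ.elt = μ'.elt * cs.simple j ∨ μ'.elt = μ.elt * cs.simple j) ∧
      Adjacent cs μ.marker j

/-- Move M3: same core and `J ∪ {m} ∪ J' ∪ {m'}` is 2-spherical. -/
def MoveM3 (μ μ' : Marking cs) : Prop :=
  μ.core = μ'.core ∧
    TwoSpherical cs (μ.supp ∪ {μ.marker} ∪ μ'.supp ∪ {μ'.marker})

/-- `K` is a maximal spherical subset of `J`. -/
def MaximalSphericalIn (cs : CoxeterSystem M W) (K J : Set B) : Prop :=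
  K ⊆ J ∧ Spherical cs K ∧ ∀ L : Set B, K ⊆ L → L ⊆ J → Spherical cs L → L = K

/-- Move M4: same core, the first marking is complete, its marker commutes with some maximal
spherical subset of its support `J`, and `J = J' ∪ {m'}`. -/
def MoveM4 (μ μ' : Marking cs) : Prop :=
  μ.core = μ'.core ∧ μ.Complete ∧
    (∃ K : Set B, MaximalSphericalIn cs K μ.supp ∧
      ∀ k ∈ K, Commute (cs.simple μ.marker) (cs.simple k)) ∧
    μ.supp = μ'.supp ∪ {μ'.marker}

/-!
Enlarge `{s}` one generator at a time, always by a generator that fails to commute with one already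
present, as long as the set stays spherical. Irreducibility of `S` means that such a generator `m`
exists until the set is all of `S`, which is not spherical; so at some stage the present set `J` is
spherical while `J ∪ {m}` is not. If `j₁, j₂, …, jₙ` are the generators of `J` other than `s` in
order of appearance, then `w = j₁ ⋯ jₙ` makes `(s, w)` a simple base with support `J`. Its marking
by `m` is semi-complete if `J ∪ {m}` is 2-spherical.

Otherwise `m` and some `i ∈ J` generate an infinite dihedral group, and the marking is complete.
Indeed, normalise the form of the geometric representation by `(α, α) = 2`. The root `w⁻¹ α_s` has
coordinates at least `1` on `J`: adding `j` to the current set `J'` reflects a root with coordinates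
at least `1` on `J'` in `α_j`, and the form is at most `-1` on that pair. Hence
`(w⁻¹ α_s, α_m) ≤ (α_i, α_m) = -2`, so the product of the two reflections has infinite order.
-/

section GroupTheory

open Subgroup in
theorem finite_closure_pair_of_mul_self_eq_one {G : Type*} [Group G] {a b : G} (ha : a * a = 1)
    (hb : b * b = 1) (hab : IsOfFinOrder (a * b)) : (closure {a, b} : Set G).Finite := by
  have ha' : a⁻¹ = a := inv_eq_of_mul_eq_one_left ha
  have hb' : b⁻¹ = b := inv_eq_of_mul_eq_one_left hb
  have hnorm : zpowers a ≤ normalizer (zpowers (a * b) : Set G) := by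
    rw [zpowers_le, mem_normalizer_iff_map_conj_eq, MonoidHom.map_zpowers]
    have hconj : a * (a * b) * a⁻¹ = (a * b)⁻¹ := by
      rw [mul_inv_rev, ha', hb', ← mul_assoc, ha, one_mul]
    rw [MonoidHom.coe_coe, MulAut.conj_apply, hconj, zpowers_inv]
  have hle : closure {a, b} ≤ zpowers a ⊔ zpowers (a * b) := by
    have hmem_a : a ∈ zpowers a ⊔ zpowers (a * b) := mem_sup_left (mem_zpowers a)
    have hmem_b : b ∈ zpowers a ⊔ zpowers (a * b) := by
      have := mul_mem hmem_a (mem_sup_right (mem_zpowers (a * b)))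
      rwa [← mul_assoc, ha, one_mul] at this
    rw [closure_le]
    rintro x (rfl | rfl) <;> assumption
  have hfin_a : (zpowers a : Set G).Finite :=
    (isOfFinOrder_iff_pow_eq_one.2 ⟨2, two_pos, by rw [pow_two, ha]⟩).finite_zpowers
  refine (hfin_a.mul hab.finite_zpowers).subset ?_
  rw [← coe_mul_of_left_le_normalizer_right _ _ hnorm]
  exact hle

end GroupTheory

section Reflection

open Module

variable {R V : Type*} [CommRing R] [AddCommGroup V] [Module R V] {x y : V} {f g : Dual R V}

theorem reflection_mul_reflection_sq_of_orthogonal (hf : f x = 2) (hg : g y = 2) (hfy : f y = 0)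
    (hgx : g x = 0) : (reflection hf * reflection hg) ^ 2 = 1 := by
  ext z
  simp only [pow_two, LinearEquiv.mul_apply, reflection_apply, map_sub, map_smul, hf, hg, hfy, hgx,
    LinearEquiv.coe_one, id]
  module

theorem apply_eq_zero_of_commute_reflection [NoZeroDivisors R] [NeZero (2 : R)]
    (hf : f x = 2) (hg : g y = 2) (hxy : LinearIndependent R ![x, y])
    (hcomm : Commute (reflection hf) (reflection hg)) : f y = 0 := by
  have hy : reflection hf (reflection hg y) = reflection hg (reflection hf y) :=
    LinearEquiv.congr_fun hcomm y
  have hrel : (2 * f y) • x + (-(f y * g x)) • y = 0 := by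
    simp only [reflection_apply, map_sub, map_smul, hg] at hy
    rw [← sub_eq_zero] at hy
    rw [← hy]
    module
  have := (LinearIndependent.pair_iff.1 hxy _ _ hrel).1
  simpa [two_ne_zero] using this

section Ordered

variable [LinearOrder R] [IsStrictOrderedRing R]

/-- The recursion `b' = -g x * a - b`, `a' = -f y * b' - a` for the coordinates of the iterates
increases both coordinates because both factors are at least `2`. -/
theorem exists_reflection_mul_reflection_pow_apply_eq (hf : f x = 2) (hg : g y = 2)
    (hfy : f y ≤ -2) (hgx : g x ≤ -2) (n : ℕ) :
    ∃ a b : R, n ≤ b ∧ b + 1 ≤ a ∧ ((reflection hf * reflection hg) ^ n) x = a • x + b • y := by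
  induction n with
  | zero => exact ⟨1, 0, by simp, by simp, by simp⟩
  | succ n ih =>
    obtain ⟨a, b, hnb, hba, heq⟩ := ih
    have : (0 : R) ≤ n := n.cast_nonneg
    have hb' : a + 1 ≤ -g x * a - b := by nlinarith
    refine ⟨-f y * (-g x * a - b) - a, -g x * a - b, ?_, by nlinarith, ?_⟩
    · push_cast
      linarith
    · rw [pow_succ', LinearEquiv.mul_apply, heq]
      simp only [LinearEquiv.mul_apply, reflection_apply, map_add, map_sub, map_smul, hf, hg]
      module

theorem not_isOfFinOrder_reflection_mul_reflection (hf : f x = 2) (hg : g y = 2)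
    (hxy : LinearIndependent R ![x, y]) (hfy : f y ≤ -2) (hgx : g x ≤ -2) :
    ¬ IsOfFinOrder (reflection hf * reflection hg) := by
  rw [isOfFinOrder_iff_pow_eq_one]
  rintro ⟨n, hn, hpow⟩
  obtain ⟨a, b, hnb, -, heq⟩ := exists_reflection_mul_reflection_pow_apply_eq hf hg hfy hgx n
  have hrel : (a - 1) • x + b • y = 0 := by
    rw [hpow, LinearEquiv.coe_one, id] at heq
    rw [sub_smul, one_smul, sub_add_eq_add_sub, ← heq, sub_self]
  have hb : b = 0 := (LinearIndependent.pair_iff.1 hxy _ _ hrel).2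
  have : (0 : R) < n := Nat.cast_pos.2 hn
  linarith

end Ordered

end Reflection

section Chebyshev

open Polynomial.Chebyshev Real

theorem chebyshevS_eval_two_mul_cos {θ : ℝ} (hθ : sin θ ≠ 0) (n : ℤ) :
    (S ℝ n).eval (2 * cos θ) = sin ((n + 1) * θ) / sin θ := by
  rw [eq_div_iff hθ, S_two_mul_real_cos]

theorem chebyshevS_eval_two_mul_cos_eq_zero {θ : ℝ} (hθ : sin θ ≠ 0) {k : ℕ} (hk : k * θ = π) :
    (S ℝ (k - 1 : ℤ)).eval (2 * cos θ) = 0 := by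
  rw [chebyshevS_eval_two_mul_cos hθ]
  simp [hk]

theorem chebyshevS_eval_add_eval_two_mul_cos_eq_zero {θ : ℝ} (hθ : sin θ ≠ 0) {k : ℕ}
    (hk : (2 * k + 1) * θ = 2 * π) :
    (S ℝ (k : ℤ)).eval (2 * cos θ) + (S ℝ (k - 1 : ℤ)).eval (2 * cos θ) = 0 := by
  have hsin : sin ((k + 1) * θ) = -sin (k * θ) := by
    rw [← sin_two_pi_sub, ← hk]
    ring_nf
  rw [chebyshevS_eval_two_mul_cos hθ, chebyshevS_eval_two_mul_cos hθ]
  simp [hsin, neg_div]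

theorem reflection_mul_reflection_pow_eq_one {V : Type*} [AddCommGroup V] [Module ℝ V] {x y : V}
    {f g : Module.Dual ℝ V} (hf : f x = 2) (hg : g y = 2) {m : ℕ} (hm : 3 ≤ m)
    (hfg : f y * g x = 4 * cos (π / m) ^ 2) :
    (Module.reflection hf * Module.reflection hg) ^ m = 1 := by
  have hm0 : (3 : ℝ) ≤ m := by exact_mod_cast hm
  obtain ⟨θ, hθ⟩ : ∃ θ : ℝ, θ = 2 * (π / m) := ⟨_, rfl⟩
  have hmθ : m * θ = 2 * π := by rw [hθ]; field_simp
  have hsin : sin θ ≠ 0 := by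
    have : 0 < θ := by rw [hθ]; positivity
    exact (sin_pos_of_pos_of_lt_pi this (by nlinarith [pi_pos])).ne'
  have htrace : 2 * cos θ = f y * g x - 2 := by
    rw [hfg, hθ, cos_two_mul]
    ring
  ext z
  rw [Module.reflection_mul_reflection_pow_apply hf hg m z _ htrace]
  obtain ⟨k, rfl | rfl⟩ := m.even_or_odd'
  · have hk : k * θ = π := by push_cast at hmθ; linarith
    rw [show (((2 * k : ℕ) : ℤ) - 2) / 2 = k - 1 by omega,
      show (((2 * k : ℕ) : ℤ) - 1) / 2 = k - 1 by omega,
      chebyshevS_eval_two_mul_cos_eq_zero hsin hk]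
    simp
  · have hk : (2 * k + 1) * θ = 2 * π := by push_cast at hmθ; linarith
    rw [show (((2 * k + 1 : ℕ) : ℤ) - 2) / 2 = k - 1 by omega,
      show (((2 * k + 1 : ℕ) : ℤ) - 1) / 2 = k by omega,
      show (((2 * k + 1 : ℕ) : ℤ) - 3) / 2 = k - 1 by omega,
      show ((2 * k + 1 : ℕ) : ℤ) / 2 = k by omega,
      chebyshevS_eval_add_eval_two_mul_cos_eq_zero hsin hk]
    simp

end Chebyshev

/-! ### Strong exchange and standard parabolic subgroups -/

section StrongExchange

theorem leftInvSeq_append (cs : CoxeterSystem M W) (ω ω' : List B) :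
    cs.leftInvSeq (ω ++ ω') =
      cs.leftInvSeq ω ++ (cs.leftInvSeq ω').map (MulAut.conj (cs.wordProd ω)) := by
  induction ω with
  | nil => simp
  | cons i ω ih =>
    simp [CoxeterSystem.leftInvSeq, ih, cs.wordProd_cons, Function.comp_def, mul_assoc]

theorem leftInvSeq_alternatingWord (cs : CoxeterSystem M W) (i j : B) :
    ∃ L, cs.leftInvSeq (CoxeterSystem.alternatingWord i j (2 * M i j)) = L ++ L := by
  have hlis : cs.leftInvSeq (CoxeterSystem.alternatingWord i j (2 * M i j)) =
      (List.range (2 * M i j)).map fun k =>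
        cs.wordProd (CoxeterSystem.alternatingWord j i (2 * k + 1)) := by
    refine List.ext_getElem (by simp) fun k hk _ => ?_
    rw [cs.getElem_leftInvSeq_alternatingWord i j _ _ (by simpa using hk)]
    simp
  have hperiod (k : ℕ) : cs.wordProd (CoxeterSystem.alternatingWord j i (2 * (M i j + k) + 1)) =
      cs.wordProd (CoxeterSystem.alternatingWord j i (2 * k + 1)) := by
    simp only [cs.prod_alternatingWord_eq_mul_pow, Nat.even_add_one, even_two, Even.mul_right,
      not_true_eq_false, if_false]
    rw [show (2 * (M i j + k) + 1) / 2 = M i j + k by omega, show (2 * k + 1) / 2 = k by omega,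
      pow_add, M.symmetric, cs.simple_mul_simple_pow, one_mul]
  refine ⟨(List.range (M i j)).map fun k =>
    cs.wordProd (CoxeterSystem.alternatingWord j i (2 * k + 1)), ?_⟩
  rw [hlis, two_mul, List.range_add, List.map_append, List.map_map]
  congr 2
  ext1 k
  exact hperiod k

open scoped Classical in
/-- The endomorphism `(t, e) ↦ (sᵢ t sᵢ, e + [t = sᵢ])` of `W × ZMod 2`. Composing these along a
word counts, modulo 2, the occurrences of `t` in its left inversion sequence; as they satisfy the
Coxeter relations, this parity depends only on the element the word represents. -/
noncomputable def parityStep (cs : CoxeterSystem M W) (i : B) : Function.End (W × ZMod 2) :=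
  fun x => (cs.simple i * x.1 * cs.simple i, x.2 + if x.1 = cs.simple i then 1 else 0)

open scoped Classical in
theorem prod_map_parityStep_reverse_apply (cs : CoxeterSystem M W) (ω : List B) (t : W)
    (e : ZMod 2) : (ω.reverse.map (parityStep cs)).prod (t, e) =
      ((cs.wordProd ω)⁻¹ * t * cs.wordProd ω, e + (cs.leftInvSeq ω).count t) := by
  induction ω generalizing t e with
  | nil => simp [Function.End.one_def]
  | cons i ω ih =>
    have hcount : ((cs.leftInvSeq ω).map (MulAut.conj (cs.simple i))).count t =
        (cs.leftInvSeq ω).count (cs.simple i * t * cs.simple i) := by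
      rw [← List.count_map_of_injective (cs.leftInvSeq ω) _ (MulAut.conj (cs.simple i)).injective]
      simp [mul_assoc]
    have hstep : ((i :: ω).reverse.map (parityStep cs)).prod (t, e) =
        (ω.reverse.map (parityStep cs)).prod (parityStep cs i (t, e)) := by
      rw [List.reverse_cons, List.map_append, List.prod_append, List.map_singleton,
        List.prod_singleton]
      rfl
    rw [hstep, parityStep, ih, CoxeterSystem.leftInvSeq, List.count_cons, hcount, cs.wordProd_cons]
    ext
    · simp [mul_assoc]
    · simp only [beq_iff_eq, eq_comm (a := t)]
      push_cast
      ring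

theorem prod_map_reverse_alternatingWord {N : Type*} [Monoid N] (f : B → N) (i j : B) (n : ℕ) :
    ((CoxeterSystem.alternatingWord j i (2 * n)).reverse.map f).prod = (f i * f j) ^ n := by
  induction n with
  | zero => simp [CoxeterSystem.alternatingWord]
  | succ n ih =>
    rw [mul_add_one, CoxeterSystem.alternatingWord_succ, CoxeterSystem.alternatingWord_succ]
    simp [-List.map_reverse, ih, pow_succ', mul_assoc]

theorem isLiftable_parityStep (cs : CoxeterSystem M W) : M.IsLiftable (parityStep cs) := by
  classical
  intro i j
  obtain ⟨L, hL⟩ := leftInvSeq_alternatingWord cs j i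
  have hprod : cs.wordProd (CoxeterSystem.alternatingWord j i (2 * M j i)) = 1 := by
    simp [cs.prod_alternatingWord_eq_mul_pow]
  funext ⟨t, e⟩
  rw [M.symmetric i j, ← prod_map_reverse_alternatingWord, prod_map_parityStep_reverse_apply, hprod,
    hL, List.count_append]
  push_cast
  rw [CharTwo.add_self_eq_zero, add_zero, inv_one, one_mul, mul_one]
  rfl

open scoped Classical in
theorem count_leftInvSeq_congr (cs : CoxeterSystem M W) {ω ω' : List B}
    (h : cs.wordProd ω = cs.wordProd ω') (t : W) :
    ((cs.leftInvSeq ω).count t : ZMod 2) = (cs.leftInvSeq ω').count t := by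
  have hlift (ω : List B) : cs.lift ⟨_, isLiftable_parityStep cs⟩ (cs.wordProd ω)⁻¹ =
      (ω.reverse.map (parityStep cs)).prod := by
    rw [← cs.wordProd_reverse, CoxeterSystem.wordProd, map_list_prod, List.map_map]
    congr 2
    ext1 i
    exact cs.lift_apply_simple (isLiftable_parityStep cs) i
  have heq := congrArg Prod.snd (congrFun ((hlift ω).symm.trans (h ▸ hlift ω')) (t, 0))
  simpa [-List.map_reverse, prod_map_parityStep_reverse_apply] using heq

open scoped Classical in
theorem exists_wordProd_eq_and_count_leftInvSeq_eq_one (cs : CoxeterSystem M W) {t : W}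
    (ht : cs.IsReflection t) :
    ∃ ω, cs.wordProd ω = t ∧ ((cs.leftInvSeq ω).count t : ZMod 2) = 1 := by
  obtain ⟨u, i, rfl⟩ := ht
  obtain ⟨ω, rfl⟩ := cs.wordProd_surjective u
  set u := cs.wordProd ω
  have hcount (v r : W) (L : List W) :
      (L.map (MulAut.conj v)).count (v * r * v⁻¹) = L.count r := by
    rw [← List.count_map_of_injective L _ (MulAut.conj v).injective, MulAut.conj_apply]
  -- Without its middle letter the palindrome represents `1`, so its two halves contribute evenly.
  have hcancel := count_leftInvSeq_congr cs (ω := ω ++ ω.reverse) (ω' := [])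
    (by simp [cs.wordProd_append]) (u * cs.simple i * u⁻¹)
  have htail := hcount (u * cs.simple i) (cs.simple i) (cs.leftInvSeq ω.reverse)
  simp only [mul_inv_rev, cs.inv_simple, ← mul_assoc, cs.simple_mul_simple_cancel_right] at htail
  refine ⟨ω ++ [i] ++ ω.reverse, by simp [cs.wordProd_append, cs.wordProd_cons, mul_assoc, u], ?_⟩
  rw [leftInvSeq_append, List.count_append, hcount] at hcancel
  rw [leftInvSeq_append, leftInvSeq_append, List.count_append, List.count_append, hcount,
    cs.wordProd_append, cs.wordProd_singleton, htail]
  push_cast at hcancel ⊢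
  simp only [CoxeterSystem.leftInvSeq_singleton, CoxeterSystem.leftInvSeq_nil,
    List.count_singleton_self, List.count_nil, Nat.cast_zero, Nat.cast_one] at hcancel ⊢
  linear_combination hcancel

theorem mem_leftInvSeq_of_isLeftInversion (cs : CoxeterSystem M W) {ω : List B} {t : W}
    (ht : cs.IsLeftInversion (cs.wordProd ω) t) : t ∈ cs.leftInvSeq ω := by
  classical
  by_contra hmem
  obtain ⟨τ, hτ, hcountτ⟩ := exists_wordProd_eq_and_count_leftInvSeq_eq_one cs ht.1
  obtain ⟨ω', hred, hω'⟩ := cs.exists_isReduced (t * cs.wordProd ω)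
  have hcount : ((cs.leftInvSeq ω').count t : ZMod 2) = 1 := by
    rw [← count_leftInvSeq_congr cs (ω := τ ++ ω) (by rw [cs.wordProd_append, hτ, hω']),
      leftInvSeq_append, List.count_append, Nat.cast_add, hcountτ, hτ,
      List.count_eq_zero_of_not_mem (l := List.map _ _), Nat.cast_zero, add_zero]
    rintro h
    obtain ⟨r, hr, hrt⟩ := List.mem_map.1 h
    rw [MulAut.conj_apply, mul_inv_eq_iff_eq_mul, mul_right_inj] at hrt
    exact hmem (hrt ▸ hr)
  have hmem' : t ∈ cs.leftInvSeq ω' := by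
    by_contra h
    simp [List.count_eq_zero_of_not_mem h] at hcount
  have hinv := cs.isLeftInversion_of_mem_leftInvSeq hred hmem'
  rw [← hω', ht.1.isLeftInversion_mul_right_iff] at hinv
  exact hinv ht

end StrongExchange

section Parabolic

/-- The standard parabolic subgroup `W_J`. -/
abbrev parabolic (cs : CoxeterSystem M W) (J : Set B) : Subgroup W :=
  Subgroup.closure (cs.simple '' J)

variable {J : Set B} {w : W}

theorem simple_mem_parabolic (cs : CoxeterSystem M W) {i : B} (hi : i ∈ J) :
    cs.simple i ∈ parabolic cs J :=
  Subgroup.subset_closure ⟨i, hi, rfl⟩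

theorem wordProd_mem_parabolic (cs : CoxeterSystem M W) {ω : List B} (hω : ∀ i ∈ ω, i ∈ J) :
    cs.wordProd ω ∈ parabolic cs J :=
  list_prod_mem <| by
    rintro _ h
    obtain ⟨i, hi, rfl⟩ := List.mem_map.1 h
    exact simple_mem_parabolic cs (hω i hi)

theorem exists_wordProd_eq_of_mem_parabolic (hw : w ∈ parabolic cs J) :
    ∃ ω, (∀ i ∈ ω, i ∈ J) ∧ cs.wordProd ω = w := by
  induction hw using Subgroup.closure_induction with
  | mem _ h =>
    obtain ⟨i, hi, rfl⟩ := h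
    exact ⟨[i], by simpa using hi, by simp⟩
  | one => exact ⟨[], by simp, by simp⟩
  | mul _ _ _ _ ihu ihv =>
    obtain ⟨ω, hω, rfl⟩ := ihu
    obtain ⟨ω', hω', rfl⟩ := ihv
    exact ⟨ω ++ ω', fun i hi => (List.mem_append.1 hi).elim (hω i) (hω' i),
      cs.wordProd_append ω ω'⟩
  | inv _ _ ih =>
    obtain ⟨ω, hω, rfl⟩ := ih
    exact ⟨ω.reverse, by simpa using hω, cs.wordProd_reverse ω⟩

theorem mem_parabolic_of_mem_leftInvSeq {ω : List B} (hω : ∀ i ∈ ω, i ∈ J) {t : W}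
    (ht : t ∈ cs.leftInvSeq ω) : t ∈ parabolic cs J := by
  induction ω generalizing t with
  | nil => simp at ht
  | cons i ω ih =>
    have hi : cs.simple i ∈ parabolic cs J := simple_mem_parabolic cs (hω i List.mem_cons_self)
    rcases List.mem_cons.1 ht with rfl | ht
    · exact hi
    · obtain ⟨r, hr, rfl⟩ := List.mem_map.1 ht
      exact mul_mem (mul_mem hi (ih (fun k hk => hω k (List.mem_cons_of_mem i hk)) hr)) (inv_mem hi)

theorem mem_parabolic_of_isLeftInversion (hw : w ∈ parabolic cs J) {t : W}
    (ht : cs.IsLeftInversion w t) : t ∈ parabolic cs J := by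
  obtain ⟨ω, hω, rfl⟩ := exists_wordProd_eq_of_mem_parabolic hw
  exact mem_parabolic_of_mem_leftInvSeq hω (mem_leftInvSeq_of_isLeftInversion cs ht)

end Parabolic

/-! ### The geometric representation -/

section GeometricRepresentation

open Real

/-- The simple root `αᵢ`, a basis vector of `B →₀ ℝ`. -/
noncomputable abbrev simpleRoot (i : B) : B →₀ ℝ :=
  Finsupp.single i 1

/-- Twice the Tits form: `(αᵢ, αⱼ) = -2 cos (π / M i j)`. Mathlib encodes `m = ∞` as `M i j = 0`,
where `π / 0 = 0` yields the value `-2` that this form has in that case. -/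
noncomputable def titsForm (M : CoxeterMatrix B) : LinearMap.BilinForm ℝ (B →₀ ℝ) :=
  Finsupp.linearCombination ℝ fun i => Finsupp.linearCombination ℝ fun j => -2 * cos (π / M i j)

theorem titsForm_simpleRoot (M : CoxeterMatrix B) (i j : B) :
    titsForm M (simpleRoot i) (simpleRoot j) = -2 * cos (π / M i j) := by
  simp [titsForm]

theorem titsForm_simpleRoot_self (M : CoxeterMatrix B) (i : B) :
    titsForm M (simpleRoot i) (simpleRoot i) = 2 := by
  simp [titsForm_simpleRoot]

theorem titsForm_comm (M : CoxeterMatrix B) (x y : B →₀ ℝ) : titsForm M x y = titsForm M y x := by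
  have : titsForm M = (titsForm M).flip := by
    ext i j
    simp [titsForm, M.symmetric i j]
  exact LinearMap.congr_fun₂ this x y

theorem titsForm_simpleRoot_le_of_le {i j : B} {m : ℕ} (hm : 2 ≤ m)
    (h : M i j = 0 ∨ m ≤ M i j) :
    titsForm M (simpleRoot i) (simpleRoot j) ≤ -2 * cos (π / m) := by
  have hm' : (2 : ℝ) ≤ m := by exact_mod_cast hm
  have hcos : cos (π / m) ≤ cos (π / M i j) := by
    apply cos_le_cos_of_nonneg_of_le_pi (by positivity)
    · exact div_le_self pi_pos.le (by linarith)
    · rcases h with h | h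
      · simp [h, pi_pos.le, div_nonneg]
      · exact div_le_div_of_nonneg_left pi_pos.le (by linarith) (by exact_mod_cast h)
  rw [titsForm_simpleRoot]
  linarith

theorem titsForm_simpleRoot_nonpos {i j : B} (hij : i ≠ j) :
    titsForm M (simpleRoot i) (simpleRoot j) ≤ 0 := by
  have hM := M.off_diagonal i j hij
  simpa using titsForm_simpleRoot_le_of_le (M := M) (i := i) (j := j) le_rfl (by omega)

theorem commute_simple_of_eq_two (cs : CoxeterSystem M W) {i j : B} (h : M i j = 2) :
    Commute (cs.simple i) (cs.simple j) := by
  have hsq := cs.simple_mul_simple_pow i j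
  rw [h, pow_two, mul_eq_one_iff_eq_inv] at hsq
  simpa [Commute, SemiconjBy] using hsq

theorem titsForm_simpleRoot_le_neg_one {i j : B} (h : ¬ Commute (cs.simple i) (cs.simple j)) :
    titsForm M (simpleRoot i) (simpleRoot j) ≤ -1 := by
  have h1 : M i j ≠ 1 := M.off_diagonal i j (by rintro rfl; exact h (Commute.refl _))
  have h2 : M i j ≠ 2 := fun h2 => h (commute_simple_of_eq_two cs h2)
  have := titsForm_simpleRoot_le_of_le (M := M) (i := i) (j := j) (m := 3) (by norm_num) (by omega)
  norm_num at this
  exact this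

theorem titsForm_simpleRoot_nonpos_of_nonneg {x : B →₀ ℝ} (hx : 0 ≤ x) {j : B} (hj : x j = 0) :
    titsForm M (simpleRoot j) x ≤ 0 := by
  have hsum : titsForm M (simpleRoot j) x =
      x.sum fun k c => c * titsForm M (simpleRoot j) (simpleRoot k) := by
    simp [titsForm, Finsupp.linearCombination_apply]
  rw [hsum]
  refine Finset.sum_nonpos fun k hk => mul_nonpos_of_nonneg_of_nonpos (hx k) ?_
  refine titsForm_simpleRoot_nonpos ?_
  rintro rfl
  exact Finsupp.mem_support_iff.1 hk hj

theorem titsForm_simpleRoot_le {x : B →₀ ℝ} (hx : 0 ≤ x) {i j : B} (hi : 1 ≤ x i) (hj : x j = 0) :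
    titsForm M (simpleRoot j) x ≤ titsForm M (simpleRoot j) (simpleRoot i) := by
  have hij : i ≠ j := by
    rintro rfl
    linarith
  have hnonneg : 0 ≤ x - simpleRoot i := fun k => by
    by_cases hk : k = i
    · subst hk
      simpa using hi
    · simpa [hk] using hx k
  have := titsForm_simpleRoot_nonpos_of_nonneg (M := M) hnonneg (j := j) (by simp [hj, hij])
  rwa [map_sub, sub_nonpos] at this

/-- The reflection in the simple root `αᵢ`. -/
noncomputable def simpleReflection (M : CoxeterMatrix B) (i : B) : (B →₀ ℝ) ≃ₗ[ℝ] (B →₀ ℝ) :=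
  Module.reflection (titsForm_simpleRoot_self M i)

theorem simpleReflection_apply (i : B) (x : B →₀ ℝ) :
    simpleReflection M i x = x - titsForm M (simpleRoot i) x • simpleRoot i :=
  Module.reflection_apply x _

theorem titsForm_simpleReflection (i : B) (x y : B →₀ ℝ) :
    titsForm M (simpleReflection M i x) (simpleReflection M i y) = titsForm M x y := by
  simp only [simpleReflection_apply, map_sub, map_smul, LinearMap.sub_apply, LinearMap.smul_apply,
    smul_eq_mul, titsForm_simpleRoot_self, titsForm_comm M x (simpleRoot i)]
  ring

theorem isLiftable_simpleReflection (M : CoxeterMatrix B) : M.IsLiftable (simpleReflection M) := by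
  intro i j
  rcases eq_or_ne i j with rfl | hij
  · rw [M.diagonal, pow_one]
    ext1 x
    exact Module.involutive_reflection (titsForm_simpleRoot_self M i) x
  have h1 : M i j ≠ 1 := M.off_diagonal i j hij
  obtain h0 | h2 | h3 : M i j = 0 ∨ M i j = 2 ∨ 3 ≤ M i j := by omega
  · rw [h0, pow_zero]
  · have horth : titsForm M (simpleRoot i) (simpleRoot j) = 0 := by
      simp [titsForm_simpleRoot, h2]
    rw [h2]
    exact reflection_mul_reflection_sq_of_orthogonal _ _ horth (titsForm_comm M _ _ ▸ horth)
  · refine reflection_mul_reflection_pow_eq_one _ _ h3 ?_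
    rw [titsForm_simpleRoot, titsForm_simpleRoot, M.symmetric j i]
    ring

/-- The geometric (Tits) representation of `W` on the space spanned by the simple roots. -/
noncomputable def geomRep (cs : CoxeterSystem M W) : W →* ((B →₀ ℝ) ≃ₗ[ℝ] (B →₀ ℝ)) :=
  cs.lift ⟨simpleReflection M, isLiftable_simpleReflection M⟩

theorem geomRep_simple (cs : CoxeterSystem M W) (i : B) :
    geomRep cs (cs.simple i) = simpleReflection M i :=
  cs.lift_apply_simple (isLiftable_simpleReflection M) i

theorem titsForm_geomRep (cs : CoxeterSystem M W) (w : W) (x y : B →₀ ℝ) :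
    titsForm M (geomRep cs w x) (geomRep cs w y) = titsForm M x y := by
  induction w using cs.simple_induction_left with
  | one => simp
  | mul_simple_left w i ih =>
    rw [map_mul, geomRep_simple, LinearEquiv.mul_apply, LinearEquiv.mul_apply,
      titsForm_simpleReflection, ih]

theorem geomRep_apply_of_notMem {J : Set B} {w : W} (hw : w ∈ parabolic cs J) {k : B} (hk : k ∉ J)
    (x : B →₀ ℝ) : geomRep cs w x k = x k := by
  obtain ⟨ω, hω, rfl⟩ := exists_wordProd_eq_of_mem_parabolic hw
  clear hw
  induction ω with
  | nil => simp
  | cons i ω ih =>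
    obtain ⟨hi, hω⟩ := List.forall_mem_cons.1 hω
    have hik : i ≠ k := ne_of_mem_of_not_mem hi hk
    rw [cs.wordProd_cons, map_mul, LinearEquiv.mul_apply, geomRep_simple, simpleReflection_apply]
    simp [hik, ih hω]

/-- The root `w αᵢ`. -/
noncomputable def root (cs : CoxeterSystem M W) (w : W) (i : B) : B →₀ ℝ :=
  geomRep cs w (simpleRoot i)

theorem titsForm_root_self (cs : CoxeterSystem M W) (w : W) (i : B) :
    titsForm M (root cs w i) (root cs w i) = 2 := by
  rw [root, titsForm_geomRep, titsForm_simpleRoot_self]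

theorem geomRep_conj_simple (cs : CoxeterSystem M W) (w : W) (i : B) :
    geomRep cs (w * cs.simple i * w⁻¹) = Module.reflection (titsForm_root_self cs w i) := by
  ext1 x
  have hx : geomRep cs w (geomRep cs w⁻¹ x) = x := by
    rw [← LinearEquiv.mul_apply, ← map_mul, mul_inv_cancel, map_one, LinearEquiv.coe_one, id]
  rw [Module.reflection_apply, root, map_mul, map_mul, LinearEquiv.mul_apply, LinearEquiv.mul_apply,
    geomRep_simple, simpleReflection_apply, map_sub, map_smul, hx, ← titsForm_geomRep cs w, hx]

theorem root_apply_of_notMem {J : Set B} {w : W} (hw : w ∈ parabolic cs J) {i k : B} (hi : i ∈ J)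
    (hk : k ∉ J) : root cs w i k = 0 := by
  rw [root, geomRep_apply_of_notMem hw hk,
    Finsupp.single_eq_of_ne (ne_of_mem_of_not_mem hi hk).symm]

theorem linearIndependent_root_simpleRoot {J : Set B} {w : W} (hw : w ∈ parabolic cs J) {i m : B}
    (hi : i ∈ J) (hm : m ∉ J) : LinearIndependent ℝ ![root cs w i, simpleRoot m] := by
  rw [LinearIndependent.pair_iff]
  intro a b hab
  have hb : b = 0 := by simpa [root_apply_of_notMem hw hi hm] using DFunLike.congr_fun hab m
  have ha : a * 2 = 0 := by
    rw [← titsForm_root_self cs w i, ← smul_eq_mul, ← map_smul]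
    rw [hb, zero_smul, add_zero] at hab
    simp [hab]
  exact ⟨by simpa using ha, hb⟩

theorem simple_notMem_parabolic (cs : CoxeterSystem M W) {J : Set B} {j : B} (hj : j ∉ J) :
    cs.simple j ∉ parabolic cs J := by
  intro h
  have := geomRep_apply_of_notMem h hj (simpleRoot j)
  rw [geomRep_simple, simpleReflection_apply, titsForm_simpleRoot_self] at this
  norm_num at this

end GeometricRepresentation

section Length

variable {J : Set B} {w : W} {j : B}

theorem length_simple_mul_of_notMem (hw : w ∈ parabolic cs J) (hj : j ∉ J) :
    cs.length (cs.simple j * w) = cs.length w + 1 := by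
  rw [← cs.not_isLeftDescent_iff, ← cs.isLeftInversion_simple_iff_isLeftDescent]
  exact fun h => simple_notMem_parabolic cs hj (mem_parabolic_of_isLeftInversion hw h)

theorem length_mul_simple_of_notMem (hw : w ∈ parabolic cs J) (hj : j ∉ J) :
    cs.length (w * cs.simple j) = cs.length w + 1 := by
  rw [← cs.length_inv, mul_inv_rev, cs.inv_simple, length_simple_mul_of_notMem (inv_mem hw) hj,
    cs.length_inv]

theorem length_simple_mul_mul_simple_of_notMem (hw : w ∈ parabolic cs J) (hj : j ∉ J)
    (hcomm : ¬ Commute (cs.simple j) w) :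
    cs.length (cs.simple j * (w * cs.simple j)) = cs.length w + 2 := by
  obtain ⟨ω, hω, rfl⟩ := exists_wordProd_eq_of_mem_parabolic hw
  have hinv : ¬ cs.IsLeftInversion (cs.wordProd (ω.concat j)) (cs.simple j) := fun h => by
    have hmem := mem_leftInvSeq_of_isLeftInversion cs h
    rw [cs.leftInvSeq_concat, List.concat_eq_append, List.mem_append, List.mem_singleton] at hmem
    rcases hmem with hmem | hmem
    · exact simple_notMem_parabolic cs hj (mem_parabolic_of_mem_leftInvSeq hω hmem)
    · exact hcomm (eq_mul_inv_iff_mul_eq.1 hmem)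
  rw [cs.isLeftInversion_simple_iff_isLeftDescent, cs.not_isLeftDescent_iff, cs.wordProd_concat]
    at hinv
  rw [hinv, length_mul_simple_of_notMem hw hj]

end Length

/-! ### Spherical and irreducible subsets -/

section Subsets

variable {J K : Set B} {i j m : B}

theorem Spherical.finite_closure_pair (hJ : Spherical cs J) {a b : W} (ha : a ∈ parabolic cs J)
    (hb : b ∈ parabolic cs J) : (Subgroup.closure {a, b} : Set W).Finite :=
  hJ.subset <| (Subgroup.closure_le _).2 <| by rintro x (rfl | rfl) <;> assumption

theorem Spherical.twoSpherical (hJ : Spherical cs J) : TwoSpherical cs J := fun _ hi _ hj =>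
  hJ.finite_closure_pair (simple_mem_parabolic cs hi) (simple_mem_parabolic cs hj)

theorem adjacent_of_ne_zero (cs : CoxeterSystem M W) (h : M i j ≠ 0) : Adjacent cs i j :=
  finite_closure_pair_of_mul_self_eq_one (cs.simple_mul_simple_self i) (cs.simple_mul_simple_self j)
    (isOfFinOrder_iff_pow_eq_one.2 ⟨_, Nat.pos_of_ne_zero h, cs.simple_mul_simple_pow i j⟩)

theorem spherical_singleton (cs : CoxeterSystem M W) (i : B) : Spherical cs {i} := by
  have : Adjacent cs i i := adjacent_of_ne_zero cs (by simp)
  simpa [Spherical, Adjacent] using this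

theorem exists_eq_zero_of_not_twoSpherical_insert (hJ : Spherical cs J)
    (h : ¬ TwoSpherical cs (insert m J)) : ∃ i ∈ J, M m i = 0 := by
  contrapose! h
  rintro a (rfl | ha) b (rfl | hb)
  · exact adjacent_of_ne_zero cs (by simp)
  · exact adjacent_of_ne_zero cs (h b hb)
  · exact adjacent_of_ne_zero cs (M.symmetric a b ▸ h a ha)
  · exact hJ.twoSpherical a ha b hb

theorem irreducibleSubset_iff : IrreducibleSubset cs J ↔ ∀ K ⊆ J, K.Nonempty →
    (∀ k ∈ K, ∀ l ∈ J \ K, Commute (cs.simple k) (cs.simple l)) → K = J := by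
  constructor
  · intro h K hKJ hK hcomm
    by_contra hne
    exact h ⟨K, J \ K, hK, Set.sdiff_nonempty.2 fun hJK => hne (hKJ.antisymm hJK),
      Set.disjoint_sdiff_right, Set.union_sdiff_cancel hKJ, hcomm⟩
  · rintro h ⟨K, L, hK, hL, hdisj, rfl, hcomm⟩
    have hdiff : (K ∪ L) \ K = L := by
      rw [Set.union_sdiff_left, hdisj.symm.sdiff_eq_left]
    have := h K Set.subset_union_left hK (by rwa [hdiff])
    rw [← this, Set.sdiff_self] at hdiff
    exact hL.ne_empty hdiff.symm

theorem IrreducibleSubset.exists_not_commute (hJ : IrreducibleSubset cs J) (hKJ : K ⊂ J)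
    (hK : K.Nonempty) : ∃ i ∈ K, ∃ m ∈ J \ K, ¬ Commute (cs.simple i) (cs.simple m) := by
  by_contra! h
  exact hKJ.ne (irreducibleSubset_iff.1 hJ K hKJ.subset hK h)

theorem irreducibleSubset_singleton (cs : CoxeterSystem M W) (i : B) : IrreducibleSubset cs {i} :=
  irreducibleSubset_iff.2 fun _ hK hne _ => hne.subset_singleton_iff.1 hK

theorem IrreducibleSubset.insert_of_not_commute (hJ : IrreducibleSubset cs J) (hi : i ∈ J)
    (hij : ¬ Commute (cs.simple i) (cs.simple j)) : IrreducibleSubset cs (insert j J) := by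
  rw [irreducibleSubset_iff]
  intro K hK hne hcomm
  have hi' : i ∈ insert j J := Set.mem_insert_of_mem j hi
  by_cases hKJ : (K ∩ J).Nonempty
  · have hJK : K ∩ J = J := irreducibleSubset_iff.1 hJ _ Set.inter_subset_right hKJ
      fun k hk l hl => hcomm k hk.1 l ⟨Set.mem_insert_of_mem j hl.1, fun h => hl.2 ⟨h, hl.1⟩⟩
    have hsub : J ⊆ K := Set.inter_eq_right.1 hJK
    have hj : j ∈ K := by
      by_contra hj
      exact hij (hcomm i (hsub hi) j ⟨Set.mem_insert j J, hj⟩)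
    exact hK.antisymm (Set.insert_subset hj hsub)
  · have hnot (k : B) (hk : k ∈ K) : k ∉ J := fun h => hKJ ⟨k, hk, h⟩
    obtain ⟨k, hk⟩ := hne
    obtain rfl : k = j := (hK hk).resolve_right (hnot k hk)
    exact absurd (hcomm k hk i ⟨hi', fun h => hnot i h hi⟩).symm hij

end Subsets

/-! ### Growth words -/

section GrowthWord

/-- `GrowthWord cs s l` says that `l`, read from right to left, lists distinct generators other than
`s`, each of which fails to commute with `s` or with a previous one. The associated base is
`(s, w)` with `w` the inverse of the product of `l`. -/
inductive GrowthWord (cs : CoxeterSystem M W) (s : B) : List B → Prop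
  | nil : GrowthWord cs s []
  | cons {i j : B} {l : List B} : GrowthWord cs s l → j ∉ s :: l → i ∈ s :: l →
      ¬ Commute (cs.simple i) (cs.simple j) → GrowthWord cs s (j :: l)

/-- The set of letters of the word `s :: l`, which is the support of the base associated with a
growth word `l`. -/
abbrev letters (s : B) (l : List B) : Set B :=
  {k | k ∈ s :: l}

theorem letters_cons (s j : B) (l : List B) : letters s (j :: l) = insert j (letters s l) := by
  ext k
  simp only [letters, List.mem_cons, Set.mem_ofPred_eq, Set.mem_insert_iff]
  tauto

variable {s : B} {l : List B} {i j m : B}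

theorem wordProd_mem_parabolic_letters (cs : CoxeterSystem M W) (s : B) (l : List B) :
    cs.wordProd l ∈ parabolic cs (letters s l) :=
  wordProd_mem_parabolic cs fun _ => List.mem_cons_of_mem s

theorem root_wordProd_apply_of_notMem (hj : j ∉ s :: l) : root cs (cs.wordProd l) s j = 0 :=
  root_apply_of_notMem (wordProd_mem_parabolic_letters cs s l) List.mem_cons_self hj

theorem root_wordProd_nonneg (h : ∀ k ∈ s :: l, 1 ≤ root cs (cs.wordProd l) s k) :
    0 ≤ root cs (cs.wordProd l) s := fun k => by
  by_cases hk : k ∈ s :: l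
  · exact zero_le_one.trans (h k hk)
  · exact (root_wordProd_apply_of_notMem hk).ge

namespace GrowthWord

theorem nodup (hl : GrowthWord cs s l) : (s :: l).Nodup := by
  induction hl with
  | nil => simp
  | cons _ hj _ _ ih =>
    simp only [List.nodup_cons, List.mem_cons, not_or] at hj ih ⊢
    exact ⟨⟨fun h => hj.1 h.symm, ih.1⟩, hj.2, ih.2⟩

theorem irreducibleSubset (hl : GrowthWord cs s l) : IrreducibleSubset cs (letters s l) := by
  induction hl with
  | nil => simpa [letters] using irreducibleSubset_singleton cs s
  | cons _ _ hi hij ih =>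
    rw [letters_cons]
    exact ih.insert_of_not_commute hi hij

theorem isReduced (hl : GrowthWord cs s l) : cs.IsReduced l := by
  induction hl with
  | nil => simp [CoxeterSystem.IsReduced]
  | @cons _ j l _ hj _ _ ih =>
    rw [CoxeterSystem.IsReduced, cs.wordProd_cons,
      length_simple_mul_of_notMem (wordProd_mem_parabolic_letters cs s l) hj, ih.eq,
      List.length_cons]

theorem one_le_root_apply (hl : GrowthWord cs s l) {k : B} (hk : k ∈ s :: l) :
    1 ≤ root cs (cs.wordProd l) s k := by
  induction hl generalizing k with
  | nil =>
    obtain rfl : k = s := by simpa using hk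
    simp [root]
  | @cons i j l _ hj hi hij ih =>
    set x := root cs (cs.wordProd l) s with hx
    have hxj : x j = 0 := root_wordProd_apply_of_notMem hj
    have hroot : root cs (cs.wordProd (j :: l)) s =
        x - titsForm M (simpleRoot j) x • simpleRoot j := by
      rw [root, cs.wordProd_cons, map_mul, LinearEquiv.mul_apply, geomRep_simple,
        simpleReflection_apply, hx, root]
    rw [hroot]
    by_cases hkj : k = j
    · have hform : titsForm M (simpleRoot j) x ≤ -1 :=
        (titsForm_simpleRoot_le (root_wordProd_nonneg fun _ => ih) (ih hi) hxj).trans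
          (titsForm_simpleRoot_le_neg_one fun h => hij h.symm)
      simp only [hkj, Finsupp.sub_apply, Finsupp.smul_apply, hxj, Finsupp.single_eq_same,
        smul_eq_mul]
      linarith
    · have hk' : k ∈ s :: l := by
        simp only [List.mem_cons, hkj, false_or] at hk ⊢
        exact hk
      simpa [hkj] using ih hk'

theorem titsForm_simpleRoot_root_le (hl : GrowthWord cs s l) (hj : j ∉ s :: l) (hi : i ∈ s :: l) :
    titsForm M (simpleRoot j) (root cs (cs.wordProd l) s) ≤
      titsForm M (simpleRoot j) (simpleRoot i) :=
  titsForm_simpleRoot_le (root_wordProd_nonneg fun _ => hl.one_le_root_apply)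
    (hl.one_le_root_apply hi) (root_wordProd_apply_of_notMem hj)

theorem not_commute_conj (hl : GrowthWord cs s l) (hj : j ∉ s :: l) (hi : i ∈ s :: l)
    (hij : ¬ Commute (cs.simple i) (cs.simple j)) :
    ¬ Commute (cs.simple j) (cs.wordProd l * cs.simple s * (cs.wordProd l)⁻¹) := by
  intro hcomm
  have hrefl := (hcomm.map (geomRep cs)).symm
  rw [geomRep_conj_simple, geomRep_simple, simpleReflection] at hrefl
  have hzero := apply_eq_zero_of_commute_reflection _ _ (linearIndependent_root_simpleRoot
    (wordProd_mem_parabolic_letters cs s l) List.mem_cons_self hj) hrefl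
  rw [titsForm_comm] at hzero
  have hle := (hl.titsForm_simpleRoot_root_le hj hi).trans
    (titsForm_simpleRoot_le_neg_one fun h => hij h.symm)
  linarith

theorem length_conj (hl : GrowthWord cs s l) :
    cs.length (cs.wordProd l * cs.simple s * (cs.wordProd l)⁻¹) = 2 * l.length + 1 := by
  induction hl with
  | nil => simp
  | @cons i j l hl hj hi hij ih =>
    have hw := wordProd_mem_parabolic_letters cs s l
    have hmem : cs.wordProd l * cs.simple s * (cs.wordProd l)⁻¹ ∈ parabolic cs (letters s l) :=
      mul_mem (mul_mem hw (simple_mem_parabolic cs List.mem_cons_self)) (inv_mem hw)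
    have hconj : cs.wordProd (j :: l) * cs.simple s * (cs.wordProd (j :: l))⁻¹ =
        cs.simple j * (cs.wordProd l * cs.simple s * (cs.wordProd l)⁻¹ * cs.simple j) := by
      simp [cs.wordProd_cons, mul_assoc]
    rw [hconj, length_simple_mul_mul_simple_of_notMem hmem hj (hl.not_commute_conj hj hi hij), ih,
      List.length_cons]
    ring

theorem isBase (hl : GrowthWord cs s l) (hsph : Spherical cs (letters s l)) :
    IsBase cs s (cs.wordProd l)⁻¹ := by
  refine ⟨?_, fun t ht hlt => ?_⟩
  · rw [inv_inv, hl.length_conj, cs.length_inv, hl.isReduced.eq]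
  · exact hsph.finite_closure_pair (simple_mem_parabolic cs List.mem_cons_self)
      (mem_parabolic_of_isLeftInversion (inv_mem (wordProd_mem_parabolic_letters cs s l)) ⟨ht, hlt⟩)

theorem isSupport (hl : GrowthWord cs s l) : IsSupport cs s (cs.wordProd l)⁻¹ (letters s l) := by
  refine ⟨List.mem_cons_self, inv_mem (wordProd_mem_parabolic_letters cs s l), ?_⟩
  intro J hs hw k hk
  by_contra hkJ
  have hone := hl.one_le_root_apply hk
  rw [root_apply_of_notMem (inv_mem_iff.1 hw) hs hkJ] at hone
  exact not_lt_of_ge hone zero_lt_one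

theorem isSimpleBase (hl : GrowthWord cs s l) (hsph : Spherical cs (letters s l)) :
    IsSimpleBase cs s (cs.wordProd l)⁻¹ := by
  obtain ⟨hs, hnodup⟩ := List.nodup_cons.1 hl.nodup
  refine ⟨hl.isBase hsph, l.reverse, (cs.wordProd_reverse l).symm, ?_, ?_, ?_⟩
  · rw [cs.length_inv, hl.isReduced.eq, List.length_reverse]
  · exact List.nodup_reverse.2 hnodup
  · rwa [List.mem_reverse]

theorem not_isOfFinOrder (hl : GrowthWord cs s l) (hm : m ∉ s :: l) (hi : i ∈ s :: l)
    (hmi : M m i = 0) : ¬ IsOfFinOrder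
      (cs.wordProd l * cs.simple s * (cs.wordProd l)⁻¹ * cs.simple m) := by
  intro hfin
  have hform : titsForm M (simpleRoot m) (root cs (cs.wordProd l) s) ≤ -2 := by
    simpa [titsForm_simpleRoot, hmi] using hl.titsForm_simpleRoot_root_le hm hi
  have hrefl := (geomRep cs).isOfFinOrder hfin
  rw [map_mul, geomRep_conj_simple, geomRep_simple, simpleReflection] at hrefl
  exact not_isOfFinOrder_reflection_mul_reflection _ _ (linearIndependent_root_simpleRoot
    (wordProd_mem_parabolic_letters cs s l) List.mem_cons_self hm)
    (titsForm_comm M _ _ ▸ hform) hform hrefl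

/-- The marking formed by the base of a growth word `l` and a generator `m` by which `l` can be
extended. -/
def marking (hl : GrowthWord cs s l) (hsph : Spherical cs (letters s l)) (hi : i ∈ s :: l)
    (him : ¬ Commute (cs.simple i) (cs.simple m)) : Marking cs where
  core := s
  elt := (cs.wordProd l)⁻¹
  marker := m
  supp := letters s l
  isBase := hl.isBase hsph
  isSupport := hl.isSupport
  marker_not_perp hperp := him (hperp.2 i hi).symm

theorem complete_marking (hl : GrowthWord cs s l) (hsph : Spherical cs (letters s l))
    (hm : m ∉ s :: l) (hi : i ∈ s :: l) (him : ¬ Commute (cs.simple i) (cs.simple m))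
    (h : ¬ TwoSpherical cs (insert m (letters s l))) : (hl.marking hsph hi him).Complete := by
  obtain ⟨k, hk, hmk⟩ := exists_eq_zero_of_not_twoSpherical_insert hsph h
  have hconj : IsConj
      (cs.simple s * ((cs.wordProd l)⁻¹ * cs.simple m * (cs.wordProd l)⁻¹⁻¹))
      (cs.wordProd l * cs.simple s * (cs.wordProd l)⁻¹ * cs.simple m) :=
    isConj_iff.2 ⟨cs.wordProd l, by simp [mul_assoc]⟩
  exact fun hfin => hl.not_isOfFinOrder hm hk hmk (hconj.isOfFinOrder hfin)

theorem semiComplete_marking (hl : GrowthWord cs s l) (hsph : Spherical cs (letters s l))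
    (hi : i ∈ s :: l) (him : ¬ Commute (cs.simple i) (cs.simple m))
    (h : TwoSpherical cs (insert m (letters s l)))
    (hnsph : ¬ Spherical cs (insert m (letters s l))) :
    (hl.marking hsph hi him).SemiComplete := by
  rw [Marking.SemiComplete, marking, Set.union_singleton]
  exact ⟨hl.irreducibleSubset.insert_of_not_commute hi him, h, hnsph⟩

theorem good_marking (hl : GrowthWord cs s l) (hsph : Spherical cs (letters s l))
    (hm : m ∉ s :: l) (hi : i ∈ s :: l) (him : ¬ Commute (cs.simple i) (cs.simple m))
    (hnsph : ¬ Spherical cs (insert m (letters s l))) : (hl.marking hsph hi him).Good := by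
  refine ⟨?_, ⟨hl.isSimpleBase hsph, hm⟩, hsph⟩
  by_cases h : TwoSpherical cs (insert m (letters s l))
  · exact .inr (hl.semiComplete_marking hsph hi him h hnsph)
  · exact .inl (hl.complete_marking hsph hm hi him h)

end GrowthWord

theorem exists_maximal_spherical_growthWord [Finite B] (cs : CoxeterSystem M W) (s : B) :
    ∃ l, GrowthWord cs s l ∧ Spherical cs (letters s l) ∧
      ∀ m, GrowthWord cs s (m :: l) → ¬ Spherical cs (letters s (m :: l)) := by
  cases nonempty_fintype B
  have hfin : {l | GrowthWord cs s l ∧ Spherical cs (letters s l)}.Finite :=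
    (List.finite_length_le B (Fintype.card B)).subset fun _ hl =>
      (List.nodup_cons.1 hl.1.nodup).2.length_le_card
  obtain ⟨l, ⟨hl, hsph⟩, hmax⟩ := hfin.exists_maximalFor List.length _
    ⟨[], .nil, by simpa [letters] using spherical_singleton cs s⟩
  refine ⟨l, hl, hsph, fun m hm hmsph => ?_⟩
  simpa using hmax (j := m :: l) ⟨hm, hmsph⟩

end GrowthWord

/-- If `S` is irreducible and non-spherical, then every `s ∈ S` is the core
of some good marking. -/
theorem exists_good_marking
    [Finite B] (cs' : CoxeterSystem M W)
    (hirr : IrreducibleSubset cs' (Set.univ : Set B))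
    (hns : ¬ Spherical cs' (Set.univ : Set B)) (s : B) :
    ∃ μ : Marking cs', μ.core = s ∧ μ.Good := by
  obtain ⟨l, hl, hsph, hmax⟩ := exists_maximal_spherical_growthWord cs' s
  have hssub : letters s l ⊂ Set.univ :=
    Set.ssubset_univ_iff.2 fun huniv => hns (huniv ▸ hsph)
  obtain ⟨i, hi, m, ⟨-, hm⟩, him⟩ := hirr.exists_not_commute hssub ⟨s, List.mem_cons_self⟩
  have hnsph : ¬ Spherical cs' (insert m (letters s l)) :=
    letters_cons s m l ▸ hmax m (hl.cons hm hi him)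
  exact ⟨hl.marking hsph hi him, rfl, hl.good_marking hsph hm hi him hnsph⟩
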